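/- arXiv:1207.7295 — 2 statements merged into one kernel-verified Lean document; each statement's English description precedes it below -/
import Mathlib

section
/- For all n ≥ 2, the following identity holds in ℤ[x]: Σ_{k≥0} (r_n^{(k−1)} − r_n^{(k)}) x^k = Σ_{k=0}^{n−2} (x^{k+2} − 1) · P_n^{(k)}(x), where r_n^{(k)} is the number of Dyck paths of semilength n having rank k (with r_n^{(−1)} = 0). -/
/-- A Dyck path is a list of steps in `{+1, -1}` whose partial sums (heights)
are all nonnegative and whose total sum is `0`. -/
def IsDyck (s : List ℤ) : Prop :=
  (∀ x ∈ s, x = 1 ∨ x = -1) ∧ (∀ i : ℕ, 0 ≤ (s.take i).sum) ∧ s.sum = 0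

/-- The area of a path: the sum of all heights `h_0, …, h_{length}`. -/
def area (s : List ℤ) : ℤ :=
  ∑ i ∈ Finset.range (s.length + 1), (s.take i).sum

/-- The length of the last descent, i.e. of the final maximal run of `-1` steps. -/
def lastDescentLen (s : List ℤ) : ℕ :=
  (s.reverse.takeWhile (fun x => x == (-1 : ℤ))).length

/-- The son of a path `s` at height `j`: insert a peak `+1, -1` immediately
after position `length - j`. -/
def son (s : List ℤ) (j : ℕ) : List ℤ :=
  s.take (s.length - j) ++ [1, -1] ++ s.drop (s.length - j)

/-- `endsUDkUD s k` says the final `k + 3` steps of `s` are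
`+1`, followed by `k + 1` copies of `-1`, followed by `+1, -1`
(i.e. `s` ends with `U D^{k+1} U D`). -/
def endsUDkUD (s : List ℤ) (k : ℕ) : Prop :=
  ∃ t : List ℤ, s = t ++ (1 :: (List.replicate (k + 1) (-1) ++ [1, -1]))

/-- The polynomial `P_n^{(k)}(x) = Σ_P x^{rank P}`, the sum being over all Dyck
paths `P` of semilength `n` ending with `U D^{k+1} U D`; the coefficient of
`x^i` is the number of such paths of rank `i`, i.e. of area `n + 2i`
(all ranks are at most `n(n-1)/2 ≤ n²`, so the range below is exhaustive). -/
noncomputable def Pnk (n k : ℕ) : Polynomial ℤ :=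
  ∑ i ∈ Finset.range (n * n + 1),
    Polynomial.C ((Nat.card {P : List ℤ // IsDyck P ∧ P.length = 2 * n ∧
      endsUDkUD P k ∧ area P = (n : ℤ) + 2 * i}) : ℤ) * Polynomial.X ^ i

/-- `r_n^{(k)}`: the number of Dyck paths of semilength `n` having rank `k`
(i.e. area `n + 2k`). -/
noncomputable def rnk (n k : ℕ) : ℕ :=
  Nat.card {P : List ℤ // IsDyck P ∧ P.length = 2 * n ∧ area P = (n : ℤ) + 2 * k}

/-!
Removing its last peak turns a Dyck path of semilength `m + 1` into a Dyck path `f` of semilength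
`m`, its father. Conversely, if the last descent of `f` has length `d`, then `f` has exactly the
`d + 1` sons obtained by inserting a peak at one of the heights `0, …, d` of that descent, and the
son at height `j` has rank `rank f + j`. The ranks of the sons thus contribute
`x ^ rank f * (1 + x + ⋯ + x ^ d)` to the rank generating function `R` of the paths of semilength
`m + 1`, and multiplying by `x - 1` gives
`(x - 1) * R = ∑ f, (x ^ (d + 1) - 1) * x ^ rank f`.

The left side of the theorem is `(x - 1) * R`. On the right side, the paths ending in
`U D^(k+1) U D` are the sons at height `0` of the fathers with `d = k + 1`, and such a son has the
same rank as its father.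
-/

open Finset Polynomial

/-! ### Inserting a peak -/

lemma take_sum_nonneg_append_iff (u v : List ℤ) :
    (∀ i, 0 ≤ ((u ++ v).take i).sum) ↔
      (∀ i, 0 ≤ (u.take i).sum) ∧ ∀ i, 0 ≤ u.sum + (v.take i).sum := by
  constructor
  · refine fun h => ⟨fun i => ?_, fun i => ?_⟩
    · rw [List.take_eq_take_min]
      simpa only [List.take_append_of_le_length (min_le_right _ _)] using h (min i u.length)
    · simpa [List.take_length_add_append] using h (u.length + i)
  · rintro ⟨hu, hv⟩ i
    rcases le_total i u.length with hi | hi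
    · simpa [List.take_append_of_le_length hi] using hu i
    · obtain ⟨m, rfl⟩ := Nat.exists_eq_add_of_le hi
      simpa [List.take_length_add_append] using hv m

lemma isDyck_insert_peak_iff (u v : List ℤ) : IsDyck (u ++ [1, -1] ++ v) ↔ IsDyck (u ++ v) := by
  have heights : (∀ i, 0 ≤ u.sum + (([1, -1] ++ v).take i).sum) ↔
      ∀ i, 0 ≤ u.sum + (v.take i).sum := by
    refine ⟨fun h i => by simpa using h (i + 2), fun h i => ?_⟩
    have hu : 0 ≤ u.sum := by simpa using h 0
    match i with
    | 0 => simpa using hu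
    | 1 => simpa using by omega
    | i + 2 => simpa using h i
  unfold IsDyck
  rw [List.append_assoc, take_sum_nonneg_append_iff, take_sum_nonneg_append_iff, heights]
  simp [or_imp, forall_and]

lemma area_append (u v : List ℤ) : area (u ++ v) = area u + v.length * u.sum + area v := by
  have left : ∀ i ∈ range (u.length + 1), ((u ++ v).take i).sum = (u.take i).sum := fun i hi => by
    rw [List.take_append_of_le_length (Nat.lt_succ_iff.1 (mem_range.1 hi))]
  have right : ∀ i, ((u ++ v).take (u.length + 1 + i)).sum = u.sum + (v.take (i + 1)).sum :=
    fun i => by rw [add_assoc, add_comm 1 i, List.take_length_add_append, List.sum_append]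
  unfold area
  rw [List.length_append, add_right_comm, sum_range_add, sum_congr rfl left,
    sum_range_succ' _ v.length]
  simp only [right, sum_add_distrib, sum_const, card_range, nsmul_eq_mul, List.take_zero,
    List.sum_nil, add_zero]
  rw [add_assoc]

lemma area_insert_peak (u v : List ℤ) :
    area (u ++ [1, -1] ++ v) = area (u ++ v) + (2 * u.sum + 1) := by
  have peak : area [1, -1] = 1 := by decide
  simp only [area_append, peak, List.sum_append, List.length_cons, List.length_nil,
    List.sum_cons, List.sum_nil]
  push_cast
  ring

/-! ### The last descent -/

lemma lastDescentLen_append_replicate (s : List ℤ) (j : ℕ) :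
    lastDescentLen (s ++ List.replicate j (-1)) = lastDescentLen s + j := by
  rw [lastDescentLen, List.reverse_append, List.takeWhile_append_of_pos (by simp)]
  simp [lastDescentLen, add_comm]

lemma lastDescentLen_append_up (s : List ℤ) : lastDescentLen (s ++ [1]) = 0 := by
  simp [lastDescentLen]

lemma lastDescentLen_append_up_cons_replicate (s : List ℤ) (j : ℕ) :
    lastDescentLen (s ++ 1 :: List.replicate j (-1)) = j := by
  rw [List.append_cons, lastDescentLen_append_replicate, lastDescentLen_append_up, zero_add]

lemma drop_eq_replicate_of_le_lastDescentLen {s : List ℤ} {j : ℕ} (hj : j ≤ lastDescentLen s) :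
    s.drop (s.length - j) = List.replicate j (-1) := by
  have hlen : j ≤ s.length :=
    hj.trans ((List.takeWhile_prefix _).length_le.trans_eq s.length_reverse)
  refine List.eq_replicate_iff.2 ⟨by rw [List.length_drop]; omega, fun x hx => ?_⟩
  have hx' : x ∈ s.reverse.takeWhile (· == (-1 : ℤ)) := by
    rw [← List.mem_reverse, ← List.take_reverse] at hx
    rw [List.prefix_iff_eq_take.1 (List.takeWhile_prefix _)]
    exact (List.take_subset_take_left _ hj) hx
  simpa using List.mem_takeWhile_imp hx'

lemma take_append_replicate_of_le_lastDescentLen {s : List ℤ} {j : ℕ}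
    (hj : j ≤ lastDescentLen s) :
    s.take (s.length - j) ++ List.replicate j (-1) = s := by
  rw [← drop_eq_replicate_of_le_lastDescentLen hj, List.take_append_drop]

lemma eq_replicate_or_eq_append_up_cons_replicate {s : List ℤ} (hs : ∀ x ∈ s, x = 1 ∨ x = -1) :
    (∃ a, s = List.replicate a (-1)) ∨ ∃ t a, s = t ++ 1 :: List.replicate a (-1) := by
  induction s using List.reverseRecOn with
  | nil => exact .inl ⟨0, rfl⟩
  | append_singleton s x ih =>
    rcases hs x (by simp) with rfl | rfl
    · exact .inr ⟨s, 0, rfl⟩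
    · rcases ih fun y hy => hs y (by simp [hy]) with ⟨a, rfl⟩ | ⟨t, a, rfl⟩
      · exact .inl ⟨a + 1, by rw [List.replicate_succ']⟩
      · exact .inr ⟨t, a + 1, by simp [List.replicate_succ']⟩

namespace IsDyck

variable {s : List ℤ}

lemma exists_eq_append_up_cons_replicate (hs : IsDyck s) (hne : s ≠ []) :
    ∃ t, s = t ++ 1 :: List.replicate (lastDescentLen s) (-1) := by
  rcases eq_replicate_or_eq_append_up_cons_replicate hs.1 with ⟨a, rfl⟩ | ⟨t, a, rfl⟩
  · have ha : a = 0 := by simpa using hs.2.2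
    simp [ha] at hne
  · exact ⟨t, by rw [lastDescentLen_append_up_cons_replicate]⟩

lemma sum_take_length_sub (hs : IsDyck s) {j : ℕ} (hj : j ≤ lastDescentLen s) :
    (s.take (s.length - j)).sum = j := by
  have h := congrArg List.sum (take_append_replicate_of_le_lastDescentLen hj)
  rw [List.sum_append, hs.2.2, List.sum_replicate, nsmul_eq_mul] at h
  linarith

lemma two_mul_lastDescentLen_le_length (hs : IsDyck s) : 2 * lastDescentLen s ≤ s.length := by
  have hsum := hs.sum_take_length_sub le_rfl
  have hle : (s.take (s.length - lastDescentLen s)).sum ≤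
      (s.take (s.length - lastDescentLen s)).length • (1 : ℤ) :=
    List.sum_le_card_nsmul _ _ fun x hx => by
      rcases hs.1 x (List.mem_of_mem_take hx) with rfl | rfl <;> norm_num
  rw [hsum, List.length_take, nsmul_eq_mul, mul_one, Nat.cast_le] at hle
  omega

end IsDyck

/-! ### Sons -/

lemma length_son (s : List ℤ) (j : ℕ) : (son s j).length = s.length + 2 := by
  simp only [son, List.length_append, List.length_take, List.length_drop, List.length_cons,
    List.length_nil]
  omega

lemma son_zero (s : List ℤ) : son s 0 = s ++ [1, -1] := by
  simp [son]

lemma son_append_replicate (t : List ℤ) (j : ℕ) :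
    son (t ++ List.replicate j (-1)) j = t ++ 1 :: List.replicate (j + 1) (-1) := by
  simp [son, List.replicate_succ]

lemma isDyck_son_iff (s : List ℤ) (j : ℕ) : IsDyck (son s j) ↔ IsDyck s := by
  rw [son, isDyck_insert_peak_iff, List.take_append_drop]

lemma IsDyck.area_son {s : List ℤ} (hs : IsDyck s) {j : ℕ} (hj : j ≤ lastDescentLen s) :
    area (son s j) = area s + (2 * j + 1) := by
  rw [son, area_insert_peak, List.take_append_drop, hs.sum_take_length_sub hj]

lemma lastDescentLen_son {s : List ℤ} {j : ℕ} (hj : j ≤ lastDescentLen s) :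
    lastDescentLen (son s j) = j + 1 := by
  rw [← take_append_replicate_of_le_lastDescentLen hj, son_append_replicate,
    lastDescentLen_append_up_cons_replicate]

lemma son_left_injective (j : ℕ) : Function.Injective fun s => son s j := by
  intro s s' h
  have hlen : s.length = s'.length := by simpa [length_son] using congrArg List.length h
  obtain ⟨hleft, hdrop⟩ := List.append_inj h (by simp [hlen])
  rw [← s.take_append_drop (s.length - j), List.append_cancel_right hleft, hdrop,
    List.take_append_drop]

lemma son_inj {s s' : List ℤ} {j j' : ℕ} (hj : j ≤ lastDescentLen s)
    (hj' : j' ≤ lastDescentLen s') : son s j = son s' j' ↔ s = s' ∧ j = j' := by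
  refine ⟨fun h => ?_, by rintro ⟨rfl, rfl⟩; rfl⟩
  -- The last descent of the son has length `j + 1`.
  obtain rfl : j = j' := by
    simpa [lastDescentLen_son hj, lastDescentLen_son hj'] using congrArg lastDescentLen h
  exact ⟨son_left_injective j h, rfl⟩

lemma IsDyck.exists_son_eq {s : List ℤ} (hs : IsDyck s) (hne : s ≠ []) :
    ∃ f, IsDyck f ∧ ∃ j ≤ lastDescentLen f, son f j = s := by
  obtain ⟨t, ht⟩ := hs.exists_eq_append_up_cons_replicate hne
  cases hd : lastDescentLen s with
  | zero =>
    rw [hd] at ht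
    have h_nonneg : 0 ≤ t.sum := by simpa [ht] using hs.2.1 t.length
    have hsum : t.sum + 1 = 0 := by simpa [ht] using hs.2.2
    omega
  | succ j =>
    rw [hd, ← son_append_replicate] at ht
    exact ⟨_, (isDyck_son_iff _ _).1 (ht ▸ hs), j,
      by simp [lastDescentLen_append_replicate], ht.symm⟩

lemma IsDyck.lastDescentLen_pos {s : List ℤ} (hs : IsDyck s) (hne : s ≠ []) :
    0 < lastDescentLen s := by
  obtain ⟨f, -, j, hj, rfl⟩ := hs.exists_son_eq hne
  simp [lastDescentLen_son hj]

lemma exists_son_zero_eq_of_endsUDkUD {s : List ℤ} {k : ℕ} (h : endsUDkUD s k) :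
    ∃ f, son f 0 = s := by
  obtain ⟨t, rfl⟩ := h
  exact ⟨t ++ 1 :: List.replicate (k + 1) (-1), by simp [son_zero]⟩

lemma IsDyck.endsUDkUD_son_zero_iff {f : List ℤ} (hf : IsDyck f) {k : ℕ} :
    endsUDkUD (son f 0) k ↔ lastDescentLen f = k + 1 := by
  rw [son_zero]
  constructor
  · rintro ⟨t, ht⟩
    rw [← List.cons_append, ← List.append_assoc] at ht
    rw [List.append_cancel_right ht, lastDescentLen_append_up_cons_replicate]
  · intro hd
    have hne : f ≠ [] := by
      rintro rfl
      simp [lastDescentLen] at hd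
    obtain ⟨t, ht⟩ := hf.exists_eq_append_up_cons_replicate hne
    rw [hd] at ht
    exact ⟨t, by simp [ht]⟩

/-! ### The generating tree -/

/-- The Dyck paths of semilength `n` (see `mem_dyckPaths`), encoded as the `n`-th level of the
generating tree: the next level consists of the sons of the paths of the current one. -/
def dyckPaths : ℕ → Finset (List ℤ)
  | 0 => {[]}
  | n + 1 => ((dyckPaths n).sigma fun f => range (lastDescentLen f + 1)).image
      fun p => son p.1 p.2

lemma mem_dyckPaths_succ {n : ℕ} {s : List ℤ} :
    s ∈ dyckPaths (n + 1) ↔ ∃ f ∈ dyckPaths n, ∃ j ≤ lastDescentLen f, son f j = s := by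
  simp [dyckPaths, and_assoc]

lemma mem_dyckPaths {n : ℕ} {s : List ℤ} : s ∈ dyckPaths n ↔ IsDyck s ∧ s.length = 2 * n := by
  induction n generalizing s with
  | zero => simpa [dyckPaths] using fun h : s = [] => by simp [h, IsDyck]
  | succ n ih =>
    rw [mem_dyckPaths_succ]
    constructor
    · rintro ⟨f, hf, j, -, rfl⟩
      obtain ⟨hf, hlen⟩ := ih.1 hf
      exact ⟨(isDyck_son_iff f j).2 hf, by rw [length_son, hlen, mul_add_one]⟩
    · rintro ⟨hs, hlen⟩
      obtain ⟨f, hf, j, hj, rfl⟩ := hs.exists_son_eq (by rintro rfl; simp at hlen)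
      rw [length_son] at hlen
      exact ⟨f, ih.2 ⟨hf, by omega⟩, j, hj, rfl⟩

lemma isDyck_of_mem_dyckPaths {n : ℕ} {s : List ℤ} (hs : s ∈ dyckPaths n) : IsDyck s :=
  (mem_dyckPaths.1 hs).1

lemma sum_dyckPaths_succ {M : Type*} [AddCommMonoid M] (n : ℕ) (g : List ℤ → M) :
    ∑ s ∈ dyckPaths (n + 1), g s =
      ∑ f ∈ dyckPaths n, ∑ j ∈ range (lastDescentLen f + 1), g (son f j) := by
  rw [dyckPaths, sum_image, sum_sigma]
  rintro ⟨f, j⟩ hp ⟨f', j'⟩ hp' h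
  simp only [coe_sigma, Set.mem_sigma_iff, mem_coe, mem_range, Nat.lt_succ_iff] at hp hp'
  obtain ⟨rfl, rfl⟩ := (son_inj hp.2 hp'.2).1 h
  rfl

lemma lastDescentLen_le_of_mem_dyckPaths {n : ℕ} {s : List ℤ} (hs : s ∈ dyckPaths n) :
    lastDescentLen s ≤ n := by
  obtain ⟨hs, hlen⟩ := mem_dyckPaths.1 hs
  have := hs.two_mul_lastDescentLen_le_length
  omega

lemma lastDescentLen_pos_of_mem_dyckPaths {n : ℕ} (hn : n ≠ 0) {s : List ℤ}
    (hs : s ∈ dyckPaths n) : 0 < lastDescentLen s := by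
  obtain ⟨hs, hlen⟩ := mem_dyckPaths.1 hs
  exact hs.lastDescentLen_pos (by rintro rfl; exact hn (by simpa using hlen))

open Classical in
lemma filter_endsUDkUD_dyckPaths_succ (n k : ℕ) :
    {s ∈ dyckPaths (n + 1) | endsUDkUD s k} =
      {f ∈ dyckPaths n | lastDescentLen f = k + 1}.image fun f => son f 0 := by
  ext s
  simp only [mem_filter, mem_image]
  constructor
  · rintro ⟨hs, hk⟩
    obtain ⟨f, rfl⟩ := exists_son_zero_eq_of_endsUDkUD hk
    rw [mem_dyckPaths, isDyck_son_iff, length_son] at hs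
    exact ⟨f, ⟨mem_dyckPaths.2 ⟨hs.1, by omega⟩, hs.1.endsUDkUD_son_zero_iff.1 hk⟩, rfl⟩
  · rintro ⟨f, ⟨hf, hk⟩, rfl⟩
    exact ⟨mem_dyckPaths_succ.2 ⟨f, hf, 0, Nat.zero_le _, rfl⟩,
      (isDyck_of_mem_dyckPaths hf).endsUDkUD_son_zero_iff.2 hk⟩

/-! ### Ranks -/

/-- The rank `(area - n) / 2` of a Dyck path of semilength `n`. On other lists the divisions may
round and a negative value is truncated to `0`. -/
def dyckRank (s : List ℤ) : ℕ := ((area s - s.length / 2) / 2).toNat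

lemma exists_rank_of_mem_dyckPaths {n : ℕ} {s : List ℤ} (hs : s ∈ dyckPaths n) :
    ∃ r ≤ n.choose 2, area s = n + 2 * r := by
  induction n generalizing s with
  | zero =>
    obtain rfl : s = [] := by simpa [dyckPaths] using hs
    exact ⟨0, le_rfl, by simp [area]⟩
  | succ n ih =>
    obtain ⟨f, hf, j, hj, rfl⟩ := mem_dyckPaths_succ.1 hs
    obtain ⟨r, hr, harea⟩ := ih hf
    have hjn : j ≤ n := hj.trans (lastDescentLen_le_of_mem_dyckPaths hf)
    refine ⟨r + j, ?_, ?_⟩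
    · rw [Nat.choose_succ_succ' n 1, Nat.choose_one_right, add_comm]
      exact add_le_add hjn hr
    · rw [(isDyck_of_mem_dyckPaths hf).area_son hj, harea]
      push_cast
      ring

section

variable {n : ℕ} {s : List ℤ}

lemma dyckRank_eq_iff (hs : s ∈ dyckPaths n) {r : ℕ} :
    dyckRank s = r ↔ area s = n + 2 * r := by
  obtain ⟨r', -, harea⟩ := exists_rank_of_mem_dyckPaths hs
  rw [dyckRank, (mem_dyckPaths.1 hs).2, harea]
  omega

lemma dyckRank_le_choose_two (hs : s ∈ dyckPaths n) : dyckRank s ≤ n.choose 2 := by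
  obtain ⟨r, hr, harea⟩ := exists_rank_of_mem_dyckPaths hs
  rwa [(dyckRank_eq_iff hs).2 harea]

lemma dyckRank_le_mul_self (hs : s ∈ dyckPaths n) : dyckRank s ≤ n * n :=
  (dyckRank_le_choose_two hs).trans ((Nat.choose_le_pow n 2).trans_eq (sq n))

lemma dyckRank_son (hs : s ∈ dyckPaths n) {j : ℕ} (hj : j ≤ lastDescentLen s) :
    dyckRank (son s j) = dyckRank s + j := by
  rw [dyckRank_eq_iff (mem_dyckPaths_succ.2 ⟨s, hs, j, hj, rfl⟩),
    (isDyck_of_mem_dyckPaths hs).area_son hj, (dyckRank_eq_iff hs).1 rfl]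
  push_cast
  ring

end

/-! ### Rank generating functions -/

/-- The generating function `∑ x ^ rank P` of a finite set of Dyck paths. -/
noncomputable def rankGenFun (S : Finset (List ℤ)) : ℤ[X] := ∑ s ∈ S, X ^ dyckRank s

lemma sum_card_fiber_mul_pow {α R : Type*} [Semiring R] (S : Finset α) (r : α → ℕ) (x : R)
    {N : ℕ} (hN : ∀ s ∈ S, r s < N) :
    ∑ i ∈ range N, (#{s ∈ S | r s = i} : R) * x ^ i = ∑ s ∈ S, x ^ r s := by
  rw [← sum_fiberwise_of_maps_to' fun s hs => mem_range.2 (hN s hs)]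
  simp only [sum_const, nsmul_eq_mul]

lemma rnk_eq_card (n k : ℕ) : rnk n k = #{s ∈ dyckPaths n | dyckRank s = k} := by
  refine Nat.subtype_card _ fun s => ?_
  rw [mem_filter, and_congr_right fun hs => dyckRank_eq_iff hs, mem_dyckPaths, and_assoc]

lemma sum_rnk_mul_X_pow {n N : ℕ} (hN : n * n < N) :
    ∑ k ∈ range N, (rnk n k : ℤ[X]) * X ^ k = rankGenFun (dyckPaths n) := by
  simp only [rnk_eq_card]
  exact sum_card_fiber_mul_pow _ _ _ fun s hs => (dyckRank_le_mul_self hs).trans_lt hN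

lemma sum_rnk_sub_rnk_mul_X_pow (n : ℕ) :
    ∑ k ∈ range (n * n + 2),
        C ((if k = 0 then 0 else (rnk n (k - 1) : ℤ)) - (rnk n k : ℤ)) * X ^ k =
      (X - 1) * rankGenFun (dyckPaths n) := by
  have shifted : ∑ k ∈ range (n * n + 2), C (if k = 0 then 0 else (rnk n (k - 1) : ℤ)) * X ^ k =
      X * rankGenFun (dyckPaths n) := by
    rw [sum_range_succ', ← sum_rnk_mul_X_pow (Nat.lt_succ_self _), mul_sum]
    simp [pow_succ', mul_left_comm]
  have unshifted : ∑ k ∈ range (n * n + 2), C (rnk n k : ℤ) * X ^ k =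
      rankGenFun (dyckPaths n) := by
    simpa using sum_rnk_mul_X_pow (Nat.lt_add_of_pos_right two_pos)
  simp only [C_sub, sub_mul, sum_sub_distrib, shifted, unshifted, one_mul]

open Classical in
lemma Pnk_eq_rankGenFun (n k : ℕ) : Pnk n k = rankGenFun {s ∈ dyckPaths n | endsUDkUD s k} := by
  have card (i : ℕ) : Nat.card {P : List ℤ // IsDyck P ∧ P.length = 2 * n ∧ endsUDkUD P k ∧
      area P = (n : ℤ) + 2 * i} = #{s ∈ {s ∈ dyckPaths n | endsUDkUD s k} | dyckRank s = i} := by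
    refine Nat.subtype_card _ fun s => ?_
    rw [filter_filter, mem_filter,
      and_congr_right fun hs => and_congr_right fun _ => dyckRank_eq_iff hs,
      mem_dyckPaths, and_assoc]
  rw [rankGenFun, ← sum_card_fiber_mul_pow _ _ _ fun s hs =>
    Nat.lt_succ_of_le (dyckRank_le_mul_self (mem_filter.1 hs).1)]
  simp [Pnk, card]

lemma Pnk_succ (n k : ℕ) :
    Pnk (n + 1) k = rankGenFun {f ∈ dyckPaths n | lastDescentLen f = k + 1} := by
  classical
  rw [Pnk_eq_rankGenFun, filter_endsUDkUD_dyckPaths_succ, rankGenFun,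
    sum_image (son_left_injective 0).injOn]
  exact sum_congr rfl fun f hf => by
    rw [dyckRank_son (mem_filter.1 hf).1 (Nat.zero_le _), add_zero]

lemma X_sub_one_mul_rankGenFun_dyckPaths_succ (n : ℕ) :
    (X - 1) * rankGenFun (dyckPaths (n + 1)) =
      ∑ f ∈ dyckPaths n, (X ^ (lastDescentLen f + 1) - 1) * X ^ dyckRank f := by
  rw [rankGenFun, sum_dyckPaths_succ, mul_sum]
  refine sum_congr rfl fun f hf => ?_
  calc (X - 1) * ∑ j ∈ range (lastDescentLen f + 1), (X : ℤ[X]) ^ dyckRank (son f j)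
      = (X - 1) * ∑ j ∈ range (lastDescentLen f + 1), X ^ dyckRank f * X ^ j := by
        refine congrArg _ (sum_congr rfl fun j hj => ?_)
        rw [dyckRank_son hf (Nat.lt_succ_iff.1 (mem_range.1 hj)), pow_add]
    _ = (X ^ (lastDescentLen f + 1) - 1) * X ^ dyckRank f := by
        rw [← mul_sum, mul_left_comm, mul_geom_sum, mul_comm]

lemma sum_dyckPaths_eq_sum_lastDescentLen {M : Type*} [AddCommMonoid M] {n : ℕ} (hn : n ≠ 0)
    (g : List ℤ → M) :
    ∑ f ∈ dyckPaths n, g f =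
      ∑ k ∈ range n, ∑ f ∈ dyckPaths n with lastDescentLen f = k + 1, g f := by
  rw [← sum_fiberwise_of_maps_to (t := Ico 1 (n + 1)) (g := lastDescentLen), sum_Ico_eq_sum_range]
  · simp only [Nat.add_sub_cancel, add_comm 1]
  · exact fun f hf => mem_Ico.2 ⟨lastDescentLen_pos_of_mem_dyckPaths hn hf,
      Nat.lt_succ_of_le (lastDescentLen_le_of_mem_dyckPaths hf)⟩

/-- For `n ≥ 2`,
`Σ_{k≥0} (r_n^{(k−1)} − r_n^{(k)}) x^k = Σ_{k=0}^{n−2} (x^{k+2} − 1) · P_n^{(k)}(x)`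
in `ℤ[x]`, with `r_n^{(−1)} = 0` (all ranks are `≤ n(n−1)/2 ≤ n²`, so the range
`0 ≤ k ≤ n² + 1` on the left is exhaustive). -/
theorem s_poly_eq_sum_Pnk (n : ℕ) (hn : 2 ≤ n) :
    (∑ k ∈ Finset.range (n * n + 2),
      Polynomial.C ((if k = 0 then 0 else (rnk n (k - 1) : ℤ)) - (rnk n k : ℤ)) *
        Polynomial.X ^ k) =
    ∑ k ∈ Finset.range (n - 1), (Polynomial.X ^ (k + 2) - 1) * Pnk n k := by
  obtain ⟨m, rfl⟩ : ∃ m, n = m + 1 := Nat.exists_eq_add_of_le' (by omega)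
  have hm : m ≠ 0 := by omega
  rw [sum_rnk_sub_rnk_mul_X_pow, X_sub_one_mul_rankGenFun_dyckPaths_succ,
    sum_dyckPaths_eq_sum_lastDescentLen hm, Nat.add_sub_cancel]
  refine sum_congr rfl fun k _ => ?_
  rw [Pnk_succ, rankGenFun, mul_sum]
  exact sum_congr rfl fun f hf => by rw [(mem_filter.1 hf).2]
end

section
/- For every n ≥ 1 and every k with 0 ≤ k ≤ n(n−1)/2, the number of Dyck paths of semilength n having area n + 2k equals the number of partitions λ = (λ_1 ≥ λ_2 ≥ ⋯ ≥ λ_{n−1} ≥ 0) fitting inside the staircase shape (n−1, n−2, …, 2, 1) (i.e., with λ_j ≤ n − j for all 1 ≤ j ≤ n−1) whose size |λ| = λ_1 + ⋯ + λ_{n−1} equals n(n−1)/2 − k. -/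
/-- The words in the steps `+1` and `-1`, with no condition on their heights; being inductive, the
predicate provides the induction principle on the first step. -/
inductive IsStepWord : List ℤ → Prop
  | nil : IsStepWord []
  | up {s : List ℤ} : IsStepWord s → IsStepWord (1 :: s)
  | down {s : List ℤ} : IsStepWord s → IsStepWord (-1 :: s)

theorem isStepWord_iff {s : List ℤ} : IsStepWord s ↔ ∀ x ∈ s, x = 1 ∨ x = -1 := by
  constructor
  · intro hs
    induction hs <;> simp_all
  · intro h
    induction s with
    | nil => exact .nil
    | cons x s ih =>
      obtain ⟨rfl | rfl, hs⟩ := List.forall_mem_cons.1 h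
      exacts [.up (ih hs), .down (ih hs)]

/-- For each down step of `s`, in order, the number of up steps after it. For a Dyck path these are
the parts of the associated staircase partition, followed by a final `0`. -/
def upsAfterDowns : List ℤ → List ℕ
  | [] => []
  | x :: s => if x = 1 then upsAfterDowns s else s.count 1 :: upsAfterDowns s

theorem count_one_cons_neg_one (s : List ℤ) : (-1 :: s).count 1 = s.count 1 :=
  List.count_cons_of_ne (by decide)

@[simp]
theorem upsAfterDowns_cons_one (s : List ℤ) : upsAfterDowns (1 :: s) = upsAfterDowns s :=
  if_pos rfl

@[simp]
theorem upsAfterDowns_cons_neg_one (s : List ℤ) :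
    upsAfterDowns (-1 :: s) = s.count 1 :: upsAfterDowns s :=
  if_neg (by decide)

theorem sortedGE_count_one_cons_upsAfterDowns (s : List ℤ) :
    (s.count 1 :: upsAfterDowns s).SortedGE := by
  rw [List.sortedGE_iff_pairwise]
  induction s with
  | nil => simp [upsAfterDowns]
  | cons x s ih =>
    rw [upsAfterDowns]
    split_ifs with hx
    · subst hx
      rw [List.count_cons_self]
      exact ih.of_cons.cons fun e he => (List.rel_of_pairwise_cons ih he).trans (Nat.le_succ _)
    · simpa [List.count_cons_of_ne hx] using ih

theorem IsStepWord.length_eq_count_one_add {s : List ℤ} (hs : IsStepWord s) :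
    s.length = s.count 1 + (upsAfterDowns s).length := by
  induction hs with
  | nil => rfl
  | up _ ih => simp [ih, add_right_comm]
  | down _ ih => simp [ih, add_assoc]

theorem IsStepWord.sum_eq_count_one_sub {s : List ℤ} (hs : IsStepWord s) :
    s.sum = s.count 1 - (upsAfterDowns s).length := by
  induction hs with
  | nil => rfl
  | up _ ih =>
    rw [List.sum_cons, ih, upsAfterDowns_cons_one, List.count_cons_self, Nat.cast_add_one]
    ring
  | down _ ih =>
    rw [List.sum_cons, ih, upsAfterDowns_cons_neg_one, count_one_cons_neg_one, List.length_cons,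
      Nat.cast_add_one]
    ring

/-- The word with `p` up steps whose list `upsAfterDowns` is `L`; meaningful if `p :: L` is weakly
decreasing. -/
def wordOfUpsAfterDowns : ℕ → List ℕ → List ℤ
  | p, [] => List.replicate p 1
  | p, e :: L => List.replicate (p - e) 1 ++ -1 :: wordOfUpsAfterDowns e L

theorem isStepWord_replicate_one_append {s : List ℤ} (hs : IsStepWord s) (k : ℕ) :
    IsStepWord (List.replicate k 1 ++ s) := by
  induction k with
  | zero => exact hs
  | succ k ih => exact .up ih

theorem upsAfterDowns_replicate_one_append (k : ℕ) (s : List ℤ) :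
    upsAfterDowns (List.replicate k 1 ++ s) = upsAfterDowns s := by
  induction k with
  | zero => rfl
  | succ k ih => rw [List.replicate_succ, List.cons_append, upsAfterDowns_cons_one, ih]

theorem isStepWord_wordOfUpsAfterDowns (p : ℕ) (L : List ℕ) :
    IsStepWord (wordOfUpsAfterDowns p L) := by
  induction L generalizing p with
  | nil => simpa [wordOfUpsAfterDowns] using isStepWord_replicate_one_append .nil p
  | cons e L ih => exact isStepWord_replicate_one_append (.down (ih e)) (p - e)

theorem count_one_wordOfUpsAfterDowns {p : ℕ} {L : List ℕ} (h : (p :: L).SortedGE) :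
    (wordOfUpsAfterDowns p L).count 1 = p := by
  induction L generalizing p with
  | nil => simp [wordOfUpsAfterDowns]
  | cons e L ih =>
    obtain ⟨hep, hL⟩ := List.isChain_cons_cons.1 h.isChain
    simp [wordOfUpsAfterDowns, ih hL.sortedGE, Nat.sub_add_cancel hep]

theorem upsAfterDowns_wordOfUpsAfterDowns {p : ℕ} {L : List ℕ} (h : (p :: L).SortedGE) :
    upsAfterDowns (wordOfUpsAfterDowns p L) = L := by
  induction L generalizing p with
  | nil => simpa [wordOfUpsAfterDowns, upsAfterDowns] using upsAfterDowns_replicate_one_append p []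
  | cons e L ih =>
    have hL : (e :: L).SortedGE := (List.isChain_cons_cons.1 h.isChain).2.sortedGE
    rw [wordOfUpsAfterDowns, upsAfterDowns_replicate_one_append, upsAfterDowns_cons_neg_one,
      count_one_wordOfUpsAfterDowns hL, ih hL]

theorem wordOfUpsAfterDowns_succ {p : ℕ} {L : List ℕ} (h : (p :: L).SortedGE) :
    wordOfUpsAfterDowns (p + 1) L = 1 :: wordOfUpsAfterDowns p L := by
  cases L with
  | nil => rfl
  | cons e L =>
    have hep : e ≤ p := (List.isChain_cons_cons.1 h.isChain).1
    simp [wordOfUpsAfterDowns, Nat.succ_sub hep, List.replicate_succ]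

theorem IsStepWord.wordOfUpsAfterDowns_upsAfterDowns {s : List ℤ} (hs : IsStepWord s) :
    wordOfUpsAfterDowns (s.count 1) (upsAfterDowns s) = s := by
  induction hs with
  | nil => rfl
  | @up s _ ih =>
    rw [upsAfterDowns_cons_one, List.count_cons_self,
      wordOfUpsAfterDowns_succ (sortedGE_count_one_cons_upsAfterDowns s), ih]
  | down _ ih => simp [wordOfUpsAfterDowns, ih]

theorem forall_nonneg_add_sum_take_cons {h x : ℤ} {s : List ℤ} :
    (∀ i, 0 ≤ h + ((x :: s).take i).sum) ↔ 0 ≤ h ∧ ∀ i, 0 ≤ h + x + (s.take i).sum := by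
  rw [← Nat.and_forall_add_one]
  simp [add_assoc]

theorem forall_getElem_cons_iff {α : Type*} {a : α} {L : List α} {P : ℕ → α → Prop} :
    (∀ (j : ℕ) (hj : j < (a :: L).length), P j (a :: L)[j]) ↔
      P 0 a ∧ ∀ (j : ℕ) (hj : j < L.length), P (j + 1) L[j] := by
  rw [← Nat.and_forall_add_one]
  simp

/-- Heights are smallest at the start and right after down steps, and the height after the `j`-th
down step, counted from `0`, is `h + s.count 1 - (upsAfterDowns s)[j] - (j + 1)`. -/
theorem IsStepWord.forall_nonneg_add_sum_take_iff {s : List ℤ} (hs : IsStepWord s) {h : ℤ} :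
    (∀ i, 0 ≤ h + (s.take i).sum) ↔ 0 ≤ h ∧
      ∀ (j : ℕ) (hj : j < (upsAfterDowns s).length),
        (upsAfterDowns s)[j] + j < h + s.count 1 := by
  induction hs generalizing h with
  | nil => simp [upsAfterDowns]
  | @up s _ ih =>
    have shift (a : ℤ) : a < h + (s.count 1 + 1) ↔ a < h + 1 + s.count 1 := by
      rw [add_right_comm, add_assoc]
    simp only [forall_nonneg_add_sum_take_cons, ih, upsAfterDowns_cons_one, List.count_cons_self,
      Nat.cast_add_one, shift]
    exact and_congr_right fun hh => and_iff_right (by omega)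
  | @down s _ ih =>
    have shift (a : ℤ) (j : ℕ) : a + (j + 1 : ℕ) < h + s.count 1 ↔ a + j < h + -1 + s.count 1 := by
      omega
    have cons_iff := forall_getElem_cons_iff (a := s.count 1) (L := upsAfterDowns s)
      (P := fun j e => (e : ℤ) + j < h + s.count 1)
    simp only [shift] at cons_iff
    rw [forall_nonneg_add_sum_take_cons, ih, upsAfterDowns_cons_neg_one, count_one_cons_neg_one,
      cons_iff]
    exact and_congr_right fun _ => and_congr_left fun _ => by omega

theorem area_cons (x : ℤ) (s : List ℤ) : area (x :: s) = x * (s.length + 1) + area s := by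
  simp only [area, List.length_cons, Finset.sum_range_succ' _ (s.length + 1),
    List.take_succ_cons, List.sum_cons, Finset.sum_add_distrib]
  simp [mul_comm]

theorem IsStepWord.two_mul_area_add_four_mul_sum {s : List ℤ} (hs : IsStepWord s) :
    2 * area s + 4 * (upsAfterDowns s).sum =
      s.count 1 * (s.count 1 + 1) + 2 * s.count 1 * (upsAfterDowns s).length
        - (upsAfterDowns s).length * ((upsAfterDowns s).length + 1) := by
  induction hs with
  | nil => simp [area, upsAfterDowns]
  | up hs ih =>
    rw [area_cons, hs.length_eq_count_one_add]
    simp only [upsAfterDowns_cons_one, List.count_cons_self, Nat.cast_add_one, Nat.cast_add]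
    linarith
  | down hs ih =>
    rw [area_cons, hs.length_eq_count_one_add]
    simp only [upsAfterDowns_cons_neg_one, count_one_cons_neg_one, List.sum_cons,
      List.length_cons, Nat.cast_add_one, Nat.cast_add]
    linarith

/-- Partitions inside the staircase `(n - 1, …, 1, 0)`, written as lists of `n` parts. The last
part is `0`; keeping it gives one part for each down step of a Dyck path of semilength `n`. -/
structure IsStaircasePartition (n : ℕ) (L : List ℕ) : Prop where
  sortedGE : L.SortedGE
  length_eq : L.length = n
  getElem_add_lt : ∀ (j : ℕ) (hj : j < L.length), L[j] + j < n

theorem isDyck_and_length_eq_iff {n : ℕ} {s : List ℤ} :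
    IsDyck s ∧ s.length = 2 * n ↔
      IsStepWord s ∧ s.count 1 = n ∧ IsStaircasePartition n (upsAfterDowns s) := by
  rw [IsDyck, ← isStepWord_iff, and_assoc]
  refine and_congr_right fun hs => ?_
  have heights := hs.forall_nonneg_add_sum_take_iff (h := 0)
  simp only [zero_add, le_refl, true_and] at heights
  rw [heights, hs.sum_eq_count_one_sub, hs.length_eq_count_one_add]
  constructor
  · rintro ⟨⟨hpos, hsum⟩, hlen⟩
    obtain rfl : s.count 1 = n := by omega
    exact ⟨rfl, (sortedGE_count_one_cons_upsAfterDowns s).pairwise.of_cons.sortedGE, by omega,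
      fun j hj => mod_cast hpos j hj⟩
  · rintro ⟨rfl, hL⟩
    exact ⟨⟨fun j hj => mod_cast hL.getElem_add_lt j hj, by simp [hL.length_eq]⟩,
      by rw [hL.length_eq, two_mul]⟩

theorem IsStaircasePartition.sortedGE_cons {n : ℕ} {L : List ℕ} (hL : IsStaircasePartition n L) :
    (n :: L).SortedGE := by
  refine (hL.sortedGE.pairwise.cons fun e he => ?_).sortedGE
  obtain ⟨j, hj, rfl⟩ := List.getElem_of_mem he
  exact (Nat.le_add_right _ j).trans (hL.getElem_add_lt j hj).le

theorem IsStaircasePartition.isDyck_and_length_wordOfUpsAfterDowns {n : ℕ} {L : List ℕ}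
    (hL : IsStaircasePartition n L) :
    IsDyck (wordOfUpsAfterDowns n L) ∧ (wordOfUpsAfterDowns n L).length = 2 * n :=
  isDyck_and_length_eq_iff.2 ⟨isStepWord_wordOfUpsAfterDowns n L,
    count_one_wordOfUpsAfterDowns hL.sortedGE_cons,
    by rwa [upsAfterDowns_wordOfUpsAfterDowns hL.sortedGE_cons]⟩

theorem area_add_two_mul_sum_upsAfterDowns {n : ℕ} {s : List ℤ}
    (hs : IsDyck s ∧ s.length = 2 * n) :
    area s + 2 * (upsAfterDowns s).sum = n * n := by
  obtain ⟨hs, hn, hL⟩ := isDyck_and_length_eq_iff.1 hs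
  have harea := hs.two_mul_area_add_four_mul_sum
  rw [hn, hL.length_eq] at harea
  linarith

/-- Dyck paths correspond to partitions inside the staircase, with the area of the path determining
the size of the partition. -/
def dyckEquivStaircase {n k N : ℕ} (hN : n * n = n + 2 * k + 2 * N) :
    {P : List ℤ // IsDyck P ∧ P.length = 2 * n ∧ area P = (n : ℤ) + 2 * k} ≃
      {L : List ℕ // IsStaircasePartition n L ∧ L.sum = N} where
  toFun P := ⟨upsAfterDowns P, by
    obtain ⟨s, hdyck, hlen, harea⟩ := P
    have hsum := area_add_two_mul_sum_upsAfterDowns ⟨hdyck, hlen⟩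
    exact ⟨(isDyck_and_length_eq_iff.1 ⟨hdyck, hlen⟩).2.2, by grind⟩⟩
  invFun L := ⟨wordOfUpsAfterDowns n L, by
    obtain ⟨L, hL, hsum⟩ := L
    have hdyck := hL.isDyck_and_length_wordOfUpsAfterDowns
    have harea := area_add_two_mul_sum_upsAfterDowns hdyck
    rw [upsAfterDowns_wordOfUpsAfterDowns hL.sortedGE_cons] at harea
    exact ⟨hdyck.1, hdyck.2, by grind⟩⟩
  left_inv P := by
    obtain ⟨hs, hn, -⟩ := isDyck_and_length_eq_iff.1 ⟨P.2.1, P.2.2.1⟩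
    simpa only [hn, Subtype.ext_iff] using hs.wordOfUpsAfterDowns_upsAfterDowns
  right_inv L := Subtype.ext (upsAfterDowns_wordOfUpsAfterDowns L.2.1.sortedGE_cons)

theorem isStaircasePartition_ofFn_append_zero_iff {m : ℕ} {l : Fin m → ℕ} :
    IsStaircasePartition (m + 1) (List.ofFn l ++ [0]) ↔
      (∀ j j' : Fin m, j ≤ j' → l j' ≤ l j) ∧ ∀ j : Fin m, l j ≤ m - (j : ℕ) := by
  have sorted : (List.ofFn l ++ [0]).SortedGE ↔ Antitone l := by
    rw [List.sortedGE_iff_pairwise, List.pairwise_append, ← List.sortedGE_iff_pairwise]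
    simp
  constructor
  · intro h
    refine ⟨fun j j' hj => sorted.1 h.sortedGE hj, fun j => ?_⟩
    have hj : l j + j < m + 1 := by simpa using h.getElem_add_lt j (by simp)
    omega
  · rintro ⟨hl, hle⟩
    refine ⟨sorted.2 fun j j' => hl j j', by simp, fun j hj => ?_⟩
    have hj : j ≤ m := by simpa using hj
    obtain hjm | rfl := hj.lt_or_eq
    · have hle : l ⟨j, hjm⟩ ≤ m - j := hle ⟨j, hjm⟩
      simp only [List.getElem_append_left, List.length_ofFn, hjm, List.getElem_ofFn]
      omega
    · simp

theorem IsStaircasePartition.exists_ofFn_append_zero_eq {m : ℕ} {L : List ℕ}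
    (hL : IsStaircasePartition (m + 1) L) : ∃ l : Fin m → ℕ, List.ofFn l ++ [0] = L := by
  have hlen : L.length = m + 1 := hL.length_eq
  have last : L[m] = 0 := by
    have hlt : L[m] + m < m + 1 := hL.getElem_add_lt m (by omega)
    omega
  exact ⟨fun j => L[j], List.ext_getElem (by simp [hlen]) (by grind)⟩

/-- A weakly decreasing function below the staircase `(m, …, 1)` becomes a staircase partition by
appending the part `0`. -/
noncomputable def funEquivStaircase (m N : ℕ) :
    {l : Fin m → ℕ // (∀ j j' : Fin m, j ≤ j' → l j' ≤ l j) ∧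
      (∀ j : Fin m, l j ≤ m - (j : ℕ)) ∧ ∑ j, l j = N} ≃
      {L : List ℕ // IsStaircasePartition (m + 1) L ∧ L.sum = N} :=
  have sum_eq (l : Fin m → ℕ) : (List.ofFn l ++ [0]).sum = ∑ j, l j := by simp [List.sum_ofFn]
  .ofBijective
    (fun l => ⟨List.ofFn l.1 ++ [0],
      isStaircasePartition_ofFn_append_zero_iff.2 ⟨l.2.1, l.2.2.1⟩, (sum_eq l).trans l.2.2.2⟩) <| by
    constructor
    · intro l l' h
      exact Subtype.ext (List.ofFn_injective (List.append_cancel_right (Subtype.ext_iff.1 h)))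
    · rintro ⟨L, hL, hsum⟩
      obtain ⟨l, rfl⟩ := hL.exists_ofFn_append_zero_eq
      obtain ⟨hanti, hle⟩ := isStaircasePartition_ofFn_append_zero_iff.1 hL
      exact ⟨⟨l, hanti, hle, (sum_eq l).symm.trans hsum⟩, rfl⟩

/-- For every `n ≥ 1` and every `0 ≤ k ≤ n(n−1)/2`, the number
of Dyck paths of semilength `n` with area `n + 2k` equals the number of
partitions `λ_1 ≥ λ_2 ≥ ⋯ ≥ λ_{n−1} ≥ 0` fitting inside the staircase shape
`(n−1, n−2, …, 2, 1)` (i.e. `λ_j ≤ n − j`, here `0`-indexed as `l j ≤ n − 1 − j`)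
of size `n(n−1)/2 − k`. -/
theorem dyck_area_eq_staircase_partitions (n k : ℕ) (hn : 1 ≤ n)
    (hk : k ≤ n * (n - 1) / 2) :
    Nat.card {P : List ℤ // IsDyck P ∧ P.length = 2 * n ∧ area P = (n : ℤ) + 2 * k} =
    Nat.card {l : Fin (n - 1) → ℕ //
      (∀ j j' : Fin (n - 1), j ≤ j' → l j' ≤ l j) ∧
      (∀ j : Fin (n - 1), l j ≤ n - 1 - (j : ℕ)) ∧
      (∑ j, l j) = n * (n - 1) / 2 - k} := by
  have hN : n * n = n + 2 * k + 2 * (n * (n - 1) / 2 - k) := by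
    have half : 2 * (n * (n - 1) / 2) = n * (n - 1) :=
      Nat.two_mul_div_two_of_even (Nat.even_mul_pred_self n)
    have square : n * n = n * (n - 1) + n := by
      rw [← Nat.mul_add_one, Nat.sub_add_cancel hn]
    omega
  rw [Nat.card_congr (dyckEquivStaircase hN)]
  obtain ⟨m, rfl⟩ := Nat.exists_eq_add_of_le' hn
  exact (Nat.card_congr (funEquivStaircase m _)).symm
end
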